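/- arXiv:1910.05201 — 4 statements merged into one kernel-verified Lean document; each statement's English description precedes it below -/
import Mathlib

section
/- Let a, a′, b, b′ be finite types and let ρ̃ : ℤ^{a ⊔ a′} → ℤ^{b ⊔ b′} be a ℤ-linear map that carries the coordinate subgroup ℤ^a (functions supported on a) into ℤ^b. Let ρ : ℤ^a → ℤ^b be the restriction of ρ̃, and let ρ′ : ℤ^{a′} → ℤ^{b′} be the induced map on quotients, under the natural identifications ℤ^{a⊔a′}/ℤ^a ≅ ℤ^{a′} and ℤ^{b⊔b′}/ℤ^b ≅ ℤ^{b′}. If ρ′ is surjective, then the group homomorphism (ℂˣ)^b → (ℂˣ)^{b⊔b′} given by extending by the constant 1 on the b′-coordinates descends to a well-defined surjective group homomorphism 𝒢(ρ) → 𝒢(ρ̃). (This is the algebraic content of the lemma asserting that the natural homomorphism of obstruction groups 𝒢(Γ) → 𝒢(Γ̃) is onto when a vertex of the decorated dual graph Γ is expanded into a tree of ghost vertices.) -/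
open scoped BigOperators

noncomputable section

/-- The complexification `ρ_ℂ : ℂ^α → ℂ^β` of a `ℤ`-linear map `ρ : ℤ^α → ℤ^β`. -/
def cplx {α β : Type} [Fintype α] [DecidableEq α]
    (ρ : (α → ℤ) →ₗ[ℤ] (β → ℤ)) : (α → ℂ) →ₗ[ℂ] (β → ℂ) where
  toFun z := fun y => ∑ x, z x * ((ρ (Pi.single x 1)) y : ℂ)
  map_add' := by
    intro z w; funext y
    simp [add_mul, Finset.sum_add_distrib]
  map_smul' := by
    intro c z; funext y
    simp [Finset.mul_sum, mul_assoc]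

/-- The subgroup `exp_β(L(ℂ^α))` of `(ℂˣ)^β`, for a `ℂ`-linear map `L : ℂ^α → ℂ^β`. -/
def expSub {α β : Type} (L : (α → ℂ) →ₗ[ℂ] (β → ℂ)) : Subgroup (β → ℂˣ) where
  carrier := {u | ∃ z : α → ℂ, ∀ y, (u y : ℂ) = Complex.exp (L z y)}
  one_mem' := ⟨0, by simp⟩
  mul_mem' := by
    rintro u v ⟨z, hz⟩ ⟨w, hw⟩
    refine ⟨z + w, fun y => ?_⟩
    simp [hz y, hw y, map_add, Complex.exp_add]
  inv_mem' := by
    rintro u ⟨z, hz⟩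
    refine ⟨-z, fun y => ?_⟩
    simp [hz y, map_neg, Complex.exp_neg]

/-- The obstruction group `𝒢(ρ) = (ℂˣ)^β / exp_β(ρ_ℂ(ℂ^α))` of a `ℤ`-linear map
`ρ : ℤ^α → ℤ^β`. -/
abbrev ObsGroup {α β : Type} [Fintype α] [DecidableEq α]
    (ρ : (α → ℤ) →ₗ[ℤ] (β → ℤ)) : Type :=
  (β → ℂˣ) ⧸ expSub (cplx ρ)

/-- Extension by zero `ℤ^a → ℤ^{a ⊔ a'}`. -/
def extL {a a' : Type} : (a → ℤ) →ₗ[ℤ] (a ⊕ a' → ℤ) where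
  toFun f := Sum.elim f 0
  map_add' := by intro f g; funext x; cases x <;> simp
  map_smul' := by intro c f; funext x; cases x <;> simp

/-- Extension by zero `ℤ^{a'} → ℤ^{a ⊔ a'}`. -/
def extR {a a' : Type} : (a' → ℤ) →ₗ[ℤ] (a ⊕ a' → ℤ) where
  toFun f := Sum.elim 0 f
  map_add' := by intro f g; funext x; cases x <;> simp
  map_smul' := by intro c f; funext x; cases x <;> simp

/-- The restriction `ρ : ℤ^a → ℤ^b` of `ρ̃ : ℤ^{a ⊔ a'} → ℤ^{b ⊔ b'}` to the
coordinate subgroups. -/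
def resMap {a a' b b' : Type}
    (ρt : ((a ⊕ a') → ℤ) →ₗ[ℤ] ((b ⊕ b') → ℤ)) : (a → ℤ) →ₗ[ℤ] (b → ℤ) :=
  (LinearMap.funLeft ℤ ℤ Sum.inl).comp (ρt.comp extL)

/-- The map `ρ' : ℤ^{a'} → ℤ^{b'}` induced by `ρ̃` on the quotients
`ℤ^{a⊔a'}/ℤ^a ≅ ℤ^{a'}` and `ℤ^{b⊔b'}/ℤ^b ≅ ℤ^{b'}`. -/
def quotMap {a a' b b' : Type}
    (ρt : ((a ⊕ a') → ℤ) →ₗ[ℤ] ((b ⊕ b') → ℤ)) : (a' → ℤ) →ₗ[ℤ] (b' → ℤ) :=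
  (LinearMap.funLeft ℤ ℤ Sum.inr).comp (ρt.comp extR)

lemma aux_extL_single {a a' : Type} [DecidableEq a] [DecidableEq a'] (x : a) :
    (extL (Pi.single x 1) : a ⊕ a' → ℤ) = Pi.single (Sum.inl x) 1 := by
  funext t
  rcases t with t | t <;> simp [extL, Pi.single_apply]

lemma aux_extR_single {a a' : Type} [DecidableEq a] [DecidableEq a'] (x : a') :
    (extR (Pi.single x 1) : a ⊕ a' → ℤ) = Pi.single (Sum.inr x) 1 := by
  funext t
  rcases t with t | t <;> simp [extR, Pi.single_apply]

lemma aux_cplx_int {α β : Type} [Fintype α] [DecidableEq α]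
    (ρ : (α → ℤ) →ₗ[ℤ] (β → ℤ)) (f : α → ℤ) (y : β) :
    cplx ρ (fun x => (f x : ℂ)) y = (ρ f y : ℂ) := by
  have h : f = ∑ x, f x • (Pi.single x 1 : α → ℤ) := by
    funext t
    simp [Finset.sum_apply, Pi.single_apply]
  conv_rhs => rw [h]
  simp only [map_sum, map_smul, Finset.sum_apply, Pi.smul_apply, smul_eq_mul]
  simp [cplx]

lemma aux_cplx_surj {α β : Type} [Fintype α] [DecidableEq α] [Fintype β]
    (ρ : (α → ℤ) →ₗ[ℤ] (β → ℤ)) (h : Function.Surjective ρ) :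
    Function.Surjective (cplx ρ) := by
  classical
  intro w
  choose g hg using fun y : β => h (Pi.single y 1)
  refine ⟨∑ y, w y • (fun x => (g y x : ℂ)), ?_⟩
  funext t
  simp [map_sum, Finset.sum_apply, aux_cplx_int, hg, Pi.single_apply]

lemma aux_cplx_inr {a a' b b' : Type} [Fintype a] [Fintype a']
    [DecidableEq a] [DecidableEq a']
    (ρt : ((a ⊕ a') → ℤ) →ₗ[ℤ] ((b ⊕ b') → ℤ))
    (hcarry : ∀ f : (a ⊕ a') → ℤ, (∀ x : a', f (Sum.inr x) = 0) →
        ∀ y : b', ρt f (Sum.inr y) = 0) (z : a ⊕ a' → ℂ) (y : b') :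
    cplx ρt z (Sum.inr y) = cplx (quotMap ρt) (fun x => z (Sum.inr x)) y := by
  have h : ∀ x : a, ρt (Pi.single (Sum.inl x) 1) (Sum.inr y) = 0 := fun x =>
    hcarry _ (fun x' => by simp) y
  simp [cplx, quotMap, LinearMap.funLeft_apply, aux_extR_single, h]

lemma aux_cplx_inl {a a' b b' : Type} [Fintype a] [Fintype a']
    [DecidableEq a] [DecidableEq a']
    (ρt : ((a ⊕ a') → ℤ) →ₗ[ℤ] ((b ⊕ b') → ℤ)) (z : a → ℂ) (y : b) :
    cplx ρt (Sum.elim z 0) (Sum.inl y) = cplx (resMap ρt) z y := by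
  simp [cplx, resMap, LinearMap.funLeft_apply, aux_extL_single]

/-- Extension by one, as a group homomorphism. -/
def auxExtOne {b b' : Type} : (b → ℂˣ) →* (b ⊕ b' → ℂˣ) where
  toFun u := Sum.elim u 1
  map_one' := by funext x; cases x <;> simp
  map_mul' := by intro f g; funext x; cases x <;> simp

/-- If `ρ̃ : ℤ^{a⊔a'} → ℤ^{b⊔b'}` carries the coordinate subgroup `ℤ^a` into `ℤ^b`
and the induced map `ρ'` on quotients is surjective, then the homomorphism
`(ℂˣ)^b → (ℂˣ)^{b⊔b'}` extending by the constant `1` on the `b'`-coordinates descends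
to a well-defined surjective group homomorphism `𝒢(ρ) → 𝒢(ρ̃)` of obstruction groups,
where `ρ` is the restriction of `ρ̃`.  (This is the algebraic content of the lemma that
the natural homomorphism `𝒢(Γ) → 𝒢(Γ̃)` is onto when a vertex of the decorated dual
graph is expanded into a tree of ghost vertices.) -/
theorem obsGroup_hom_surjective {a a' b b' : Type}
    [Fintype a] [Fintype a'] [Fintype b] [Fintype b']
    [DecidableEq a] [DecidableEq a']
    (ρt : ((a ⊕ a') → ℤ) →ₗ[ℤ] ((b ⊕ b') → ℤ))
    (hcarry : ∀ f : (a ⊕ a') → ℤ, (∀ x : a', f (Sum.inr x) = 0) →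
        ∀ y : b', ρt f (Sum.inr y) = 0)
    (hsurj : Function.Surjective (quotMap ρt)) :
    ∃ φ : ObsGroup (resMap ρt) →* ObsGroup ρt,
      Function.Surjective φ ∧
      ∀ u : b → ℂˣ,
        φ (QuotientGroup.mk u) = QuotientGroup.mk (Sum.elim u 1) := by
  have hle : expSub (cplx (resMap ρt)) ≤ (expSub (cplx ρt)).comap auxExtOne := by
    rintro u ⟨z, hz⟩
    refine ⟨Sum.elim z 0, ?_⟩
    rintro (y | y)
    · rw [aux_cplx_inl]
      exact hz y
    · rw [aux_cplx_inr ρt hcarry]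
      have h0 : (fun x : a' => (Sum.elim z 0 : a ⊕ a' → ℂ) (Sum.inr x)) = 0 := by
        funext x; simp
      rw [h0]
      simp [auxExtOne]
  refine ⟨QuotientGroup.map _ _ auxExtOne hle, ?_, fun u => rfl⟩
  intro q
  obtain ⟨v, rfl⟩ := QuotientGroup.mk_surjective q
  obtain ⟨z, hz⟩ := aux_cplx_surj _ hsurj (fun y => Complex.log (v (Sum.inr y) : ℂ))
  set Z : a ⊕ a' → ℂ := Sum.elim 0 z with hZ
  refine ⟨QuotientGroup.mk (fun y => v (Sum.inl y) *
    (Units.mk0 (Complex.exp (cplx ρt Z (Sum.inl y))) (Complex.exp_ne_zero _))⁻¹), ?_⟩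
  rw [QuotientGroup.map_mk]
  refine QuotientGroup.eq.2 ⟨Z, ?_⟩
  rintro (y | y)
  · simp [auxExtOne]
  · rw [aux_cplx_inr ρt hcarry]
    have h0 : (fun x : a' => Z (Sum.inr x)) = z := rfl
    rw [h0, hz, Complex.exp_log (Units.ne_zero _)]
    simp [auxExtOne]
end
end

section
/- For finite index types a, b and any ℤ-linear map ρ : ℤ^a → ℤ^b, the obstruction group 𝒢(ρ) = (ℂˣ)^b / exp_b(ρ_ℂ(ℂ^a)) is isomorphic as a group to (ℂˣ)^r, where r is the rank of the finitely generated abelian group coker(ρ) = ℤ^b / ρ(ℤ^a). (This expresses the assertion that the obstruction group 𝒢(Γ) is a complex torus whose Lie algebra is coker(ρ_ℂ).) -/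
open scoped BigOperators TensorProduct

noncomputable section

theorem finrank_rat_tensor_aux (Q : Type) [AddCommGroup Q] [Module.Finite ℤ Q] :
    Module.finrank ℚ (ℚ ⊗[ℤ] Q) = Module.finrank ℤ (Q ⧸ Submodule.torsion ℤ Q) := by
  rw [finrank_quotient_eq_of_le_torsion (le_refl (Submodule.torsion ℤ Q))]
  exact (TensorProduct.isBaseChange ℤ Q ℚ).finrank_eq

/-- Integer splitting data for the torsion free quotient of the cokernel. -/
theorem splitting_aux {a b : Type} [Fintype a] [Fintype b] [DecidableEq a] [DecidableEq b]
    (ρ : (a → ℤ) →ₗ[ℤ] (b → ℤ)) (r : ℕ)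
    (hr : Module.finrank ℤ (((b → ℤ) ⧸ LinearMap.range ρ) ⧸
      Submodule.torsion ℤ ((b → ℤ) ⧸ LinearMap.range ρ)) = r) :
    ∃ (π : (b → ℤ) →ₗ[ℤ] (Fin r → ℤ)) (σ : (Fin r → ℤ) →ₗ[ℤ] (b → ℤ)),
      π ∘ₗ σ = LinearMap.id ∧ π ∘ₗ ρ = 0 ∧
      ∀ v : b → ℤ, ∃ (n : ℤ) (t : a → ℤ), n ≠ 0 ∧ n • (v - σ (π v)) = ρ t := by
  let e := (Module.finBasisOfFinrankEq ℤ _ hr).equivFun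
  let q := (Submodule.torsion ℤ ((b → ℤ) ⧸ LinearMap.range ρ)).mkQ ∘ₗ (LinearMap.range ρ).mkQ
  have hq : Function.Surjective q :=
    (Submodule.mkQ_surjective _).comp (Submodule.mkQ_surjective _)
  let π : (b → ℤ) →ₗ[ℤ] (Fin r → ℤ) := e.toLinearMap ∘ₗ q
  have hπ : Function.Surjective π := e.surjective.comp hq
  obtain ⟨σ, hσ⟩ := Module.projective_lifting_property π LinearMap.id hπ
  refine ⟨π, σ, hσ, ?_, ?_⟩
  · refine LinearMap.ext fun x => ?_
    have : (LinearMap.range ρ).mkQ (ρ x) = 0 := by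
      simp
    simp only [π, q, LinearMap.comp_apply, this, map_zero, LinearMap.zero_apply]
  · intro v
    have h0 : π (v - σ (π v)) = 0 := by
      have := LinearMap.congr_fun hσ (π v)
      simp only [LinearMap.comp_apply, LinearMap.id_apply] at this
      rw [map_sub, this, sub_self]
    have h1 : q (v - σ (π v)) = 0 := e.map_eq_zero_iff.mp h0
    have h2 : (LinearMap.range ρ).mkQ (v - σ (π v)) ∈
        Submodule.torsion ℤ ((b → ℤ) ⧸ LinearMap.range ρ) :=
      (Submodule.Quotient.mk_eq_zero _).mp h1
    rw [Submodule.mem_torsion_iff] at h2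
    obtain ⟨n, hn⟩ := h2
    have h3 : (LinearMap.range ρ).mkQ ((n : ℤ) • (v - σ (π v))) = 0 := by
      rw [map_smul]; exact hn
    obtain ⟨t, ht⟩ := (Submodule.Quotient.mk_eq_zero _).mp h3
    exact ⟨n, t, nonZeroDivisors.coe_ne_zero n, ht.symm⟩

theorem cplx_apply_aux {α β : Type} [Fintype α] [DecidableEq α]
    (ρ : (α → ℤ) →ₗ[ℤ] (β → ℤ)) (z : α → ℂ) (y : β) :
    cplx ρ z y = ∑ x, z x * ((ρ (Pi.single x 1)) y : ℂ) := rfl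

theorem cplx_intCast_aux {α β : Type} [Fintype α] [DecidableEq α]
    (ρ : (α → ℤ) →ₗ[ℤ] (β → ℤ)) (m : α → ℤ) (y : β) :
    cplx ρ (fun x => (m x : ℂ)) y = (ρ m y : ℂ) := by
  rw [cplx_apply_aux]
  have h : ρ m = ∑ x, m x • ρ (Pi.single x 1) := by
    conv_lhs => rw [pi_eq_sum_univ' m]
    rw [map_sum]
    refine Finset.sum_congr rfl fun x _ => ?_
    rw [map_smul]
  rw [h]
  simp

theorem cplx_single_aux {α β : Type} [Fintype α] [DecidableEq α]
    (ρ : (α → ℤ) →ₗ[ℤ] (β → ℤ)) (x : α) (y : β) :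
    cplx ρ (Pi.single x 1) y = (ρ (Pi.single x 1) y : ℂ) := by
  rw [cplx_apply_aux, Finset.sum_eq_single x]
  · simp
  · intro x' _ h; simp [Pi.single_eq_of_ne h]
  · simp

theorem cplx_comp_aux {α β γ : Type} [Fintype α] [DecidableEq α] [Fintype β] [DecidableEq β]
    (ρ : (α → ℤ) →ₗ[ℤ] (β → ℤ)) (τ : (β → ℤ) →ₗ[ℤ] (γ → ℤ)) (z : α → ℂ) :
    cplx τ (cplx ρ z) = cplx (τ ∘ₗ ρ) z := by
  have : cplx τ ∘ₗ cplx ρ = cplx (τ ∘ₗ ρ) := by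
    refine LinearMap.pi_ext' fun x => LinearMap.ext_ring ?_
    funext y
    simp only [LinearMap.comp_apply, LinearMap.coe_single]
    have h : cplx ρ (Pi.single x 1) = fun y => ((ρ (Pi.single x 1) y : ℤ) : ℂ) :=
      funext fun y => cplx_single_aux ρ x y
    rw [h, cplx_intCast_aux, cplx_single_aux]
    rfl
  exact LinearMap.congr_fun this z

theorem cplx_id_aux {α : Type} [Fintype α] [DecidableEq α] (z : α → ℂ) :
    cplx (LinearMap.id : (α → ℤ) →ₗ[ℤ] (α → ℤ)) z = z := by
  funext y
  rw [cplx_apply_aux, Finset.sum_eq_single y]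
  · simp
  · intro x' _ h; simp [Pi.single_eq_of_ne h.symm]
  · simp

/-- The componentwise exponential. -/
def expPi {β : Type} (w : β → ℂ) : β → ℂˣ := fun y => Units.mk0 _ (Complex.exp_ne_zero (w y))

theorem expPi_surj {β : Type} (u : β → ℂˣ) : ∃ w, expPi w = u := by
  refine ⟨fun y => Complex.log (u y), ?_⟩
  funext y
  ext
  simp [expPi, Complex.exp_log]

/-- The homomorphism of tori attached to an integer linear map. -/
def torusHom {α β : Type} [Fintype α] [DecidableEq α]
    (τ : (α → ℤ) →ₗ[ℤ] (β → ℤ)) : (α → ℂˣ) →* (β → ℂˣ) where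
  toFun u := fun y => ∏ x, u x ^ (τ (Pi.single x 1) y)
  map_one' := by funext y; simp
  map_mul' u v := by funext y; simp [mul_zpow, Finset.prod_mul_distrib]

theorem torusHom_expPi {α β : Type} [Fintype α] [DecidableEq α]
    (τ : (α → ℤ) →ₗ[ℤ] (β → ℤ)) (w : α → ℂ) :
    torusHom τ (expPi w) = expPi (cplx τ w) := by
  funext y
  ext
  simp only [torusHom, expPi, MonoidHom.coe_mk, OneHom.coe_mk, Units.coe_prod,
    Units.val_zpow_eq_zpow_val, Units.val_mk0, cplx_apply_aux, Complex.exp_sum]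
  refine Finset.prod_congr rfl fun x _ => ?_
  rw [← Complex.exp_int_mul, mul_comm]

theorem expPi_eq_one {β : Type} (w : β → ℂ) (h : expPi w = 1) :
    ∃ m : β → ℤ, w = (2 * Real.pi * Complex.I : ℂ) • fun y => (m y : ℂ) := by
  have h1 : ∀ y, ∃ n : ℤ, w y = n * (2 * Real.pi * Complex.I) := fun y => by
    rw [← Complex.exp_eq_one_iff]
    have := congrArg Units.val (congrFun h y)
    simpa [expPi] using this
  choose m hm using h1
  exact ⟨m, funext fun y => by simp [hm y, mul_comm]⟩

theorem expPi_int {β : Type} (m : β → ℤ) (w : β → ℂ) :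
    expPi (w - (2 * Real.pi * Complex.I : ℂ) • fun y => (m y : ℂ)) = expPi w := by
  funext y
  ext
  simp only [expPi, Units.val_mk0, Pi.sub_apply, Pi.smul_apply, smul_eq_mul]
  rw [Complex.exp_eq_exp_iff_exists_int]
  exact ⟨-m y, by push_cast; ring⟩

/-- The obstruction group `𝒢(ρ)` is a complex torus: it is isomorphic, as a group, to
`(ℂˣ)^r` where `r` is the rank of the finitely generated abelian group
`coker ρ = ℤ^b / ρ(ℤ^a)` (the dimension over `ℚ` of its rationalization
`ℚ ⊗[ℤ] coker ρ`). -/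
theorem obsGroup_iso_torus {a b : Type} [Fintype a] [Fintype b] [DecidableEq a]
    (ρ : (a → ℤ) →ₗ[ℤ] (b → ℤ)) :
    Nonempty (ObsGroup ρ ≃*
      (Fin (Module.finrank ℚ (ℚ ⊗[ℤ] ((b → ℤ) ⧸ LinearMap.range ρ))) → ℂˣ)) := by
  classical
  obtain ⟨π, σ, hσ, hρ, ht⟩ := splitting_aux ρ _
    (finrank_rat_tensor_aux ((b → ℤ) ⧸ LinearMap.range ρ)).symm
  generalize Module.finrank ℚ (ℚ ⊗[ℤ] ((b → ℤ) ⧸ LinearMap.range ρ)) = r at *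
  have hsurj : Function.Surjective (torusHom π) := by
    intro u
    obtain ⟨w, rfl⟩ := expPi_surj u
    exact ⟨expPi (cplx σ w), by rw [torusHom_expPi, cplx_comp_aux, hσ, cplx_id_aux]⟩
  have hker : expSub (cplx ρ) = (torusHom π).ker := by
    ext u
    rw [MonoidHom.mem_ker]
    constructor
    · rintro ⟨z, hz⟩
      have hu : u = expPi (cplx ρ z) := by
        funext y; ext; exact hz y
      rw [hu, torusHom_expPi, cplx_comp_aux, hρ]
      funext y; ext; simp [expPi, cplx_apply_aux]
    · intro hu
      obtain ⟨w, rfl⟩ := expPi_surj u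
      rw [torusHom_expPi] at hu
      obtain ⟨m, hm⟩ := expPi_eq_one _ hu
      have hw : ∃ w', expPi w' = expPi w ∧ cplx π w' = 0 := by
        refine ⟨w - (2 * Real.pi * Complex.I : ℂ) • fun y => ((σ m y : ℤ) : ℂ),
          expPi_int _ _, ?_⟩
        have h2 : cplx π (fun y => ((σ m y : ℤ) : ℂ)) = fun y => (m y : ℂ) := by
          funext y
          rw [cplx_intCast_aux]
          have := LinearMap.congr_fun hσ m
          simp only [LinearMap.comp_apply, LinearMap.id_apply] at this
          rw [this]
        rw [map_sub, map_smul, hm, h2, sub_self]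
      obtain ⟨w', hw1, hw2⟩ := hw
      rw [← hw1]
      choose n t hn hnt using fun y : b => ht (Pi.single y 1)
      -- every complex vector differs from its `σ π` part by the image of `ρ`
      have key : ∀ v : b → ℂ, v - cplx σ (cplx π v) ∈ LinearMap.range (cplx ρ) := by
        intro v
        have hv : v = ∑ y, v y • (Pi.single y (1 : ℂ) : b → ℂ) := pi_eq_sum_univ' v
        rw [hv]
        simp only [map_sum, map_smul]
        rw [← Finset.sum_sub_distrib]
        refine Submodule.sum_mem _ fun y _ => ?_
        rw [← smul_sub]
        refine Submodule.smul_mem _ _ ?_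
        refine ⟨((n y : ℂ)⁻¹) • fun x => (t y x : ℂ), ?_⟩
        rw [map_smul, inv_smul_eq_iff₀ (by exact_mod_cast hn y)]
        funext k
        rw [cplx_intCast_aux, ← hnt, cplx_comp_aux]
        simp only [Pi.smul_apply, Pi.sub_apply, cplx_single_aux, smul_eq_mul,
          LinearMap.comp_apply]
        push_cast
        congr 2
        by_cases hk : k = y
        · subst hk; simp
        · simp [Pi.single_eq_of_ne hk]
      obtain ⟨z, hz⟩ := key w'
      rw [hw2, map_zero, sub_zero] at hz
      exact ⟨z, fun y => by rw [hz]; rfl⟩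
  exact ⟨(QuotientGroup.quotientMulEquivOfEq hker).trans
    (QuotientGroup.quotientKerEquivOfSurjective _ hsurj)⟩
end
end

section
/- Let G be a finite tree on a nonempty vertex set V, let N ∈ ℕ, let L be a finite set of legs with an attachment map v : L → V, let s : L → ℤ^N be leg vectors, and let b : V → ℤ^N be prescribed vertex totals. Then there exists an assignment t : V × V → ℤ^N with t(u,w) = −t(w,u) for all u, w, with t(u,w) = 0 whenever u and w are not adjacent in G, and with Σ_{u∈V} t(w,u) + Σ_{l∈L, v(l)=w} s(l) = b(w) for every w ∈ V, if and only if Σ_{l∈L} s(l) = Σ_{w∈V} b(w); moreover, when it exists, such t is unique. (This is the claim that on a genus-zero dual graph there is at most one — and, when the balancing condition holds, exactly one — choice of contact-order decorations s_{e⃗} at the nodes satisfying the combinatorial matching conditions.) -/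
open scoped BigOperators

/-- `t : V × V → ℤ^N` is a decoration of the tree `G` with legs `L` (attached by `vmap`,
carrying vectors `s`) and prescribed vertex totals `b` if it is antisymmetric, supported
on adjacent pairs, and satisfies the balancing condition
`∑_u t(w,u) + ∑_{l : vmap l = w} s l = b w` at every vertex `w`. -/
def IsTreeDecoration {V L : Type} [Fintype V] [Fintype L] [DecidableEq V] {N : ℕ}
    (G : SimpleGraph V) (vmap : L → V) (s : L → Fin N → ℤ) (b : V → Fin N → ℤ)
    (t : V → V → Fin N → ℤ) : Prop :=
  (∀ u w, t u w = - t w u) ∧ (∀ u w, ¬ G.Adj u w → t u w = 0) ∧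
  (∀ w, (∑ u, t w u) + ∑ l ∈ Finset.univ.filter (fun l => vmap l = w), s l = b w)

lemma antisymm_sum_zero {V : Type} {N : ℕ} (S : Finset V) (f : V → V → Fin N → ℤ)
    (h : ∀ u w, f u w = - f w u) : ∑ x ∈ S, ∑ y ∈ S, f x y = 0 := by
  have h1 : ∑ x ∈ S, ∑ y ∈ S, f x y = - ∑ x ∈ S, ∑ y ∈ S, f x y := by
    conv_lhs => rw [Finset.sum_comm]
    rw [← Finset.sum_neg_distrib]
    refine Finset.sum_congr rfl fun x _ => ?_
    rw [← Finset.sum_neg_distrib]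
    exact Finset.sum_congr rfl fun y _ => h y x
  funext i
  have := congrFun h1 i
  simp only [Pi.neg_apply, Pi.zero_apply] at this ⊢
  omega

lemma flow_zero {V : Type} [Fintype V] {N : ℕ} (G : SimpleGraph V) (hG : G.IsAcyclic)
    (f : V → V → Fin N → ℤ) (h : ∀ u w, f u w = - f w u)
    (hs : ∀ u w, ¬ G.Adj u w → f u w = 0) (hd : ∀ w, ∑ u, f w u = 0) (u w : V) :
    f u w = 0 := by
  classical
  by_cases ha : G.Adj u w
  swap
  · exact hs u w ha
  have hb := (SimpleGraph.isAcyclic_iff_forall_adj_isBridge.1 hG) ha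
  rw [SimpleGraph.isBridge_iff] at hb
  set H := G \ SimpleGraph.fromEdgeSet {s(u, w)} with hH
  have hb' : ¬ H.Reachable u w := by first | exact hb | exact hb.2
  set S : Finset V := Finset.univ.filter (fun x => H.Reachable u x) with hS
  have huS : u ∈ S := by simp [hS]
  have hwS : w ∉ S := by simpa [hS] using hb'
  have key : ∀ x ∈ S, ∀ y, y ∉ S → f x y ≠ 0 → x = u ∧ y = w := by
    intro x hx y hy hne
    have hxy : G.Adj x y := by
      by_contra hc
      exact hne (hs x y hc)
    by_contra hc
    simp only [hS, Finset.mem_filter, Finset.mem_univ, true_and] at hx hy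
    apply hy
    by_cases hc2 : x = w ∧ y = u
    · rw [hc2.2]
    · refine hx.trans (SimpleGraph.Adj.reachable ?_)
      rw [hH, SimpleGraph.sdiff_adj, SimpleGraph.fromEdgeSet_adj]
      refine ⟨hxy, fun hh => ?_⟩
      have := hh.1
      rw [Set.mem_singleton_iff, Sym2.eq_iff] at this
      tauto
  have h0 : ∑ x ∈ S, ∑ y, f x y = 0 := Finset.sum_eq_zero fun x _ => hd x
  have h1 : ∑ x ∈ S, ∑ y, f x y = ∑ x ∈ S, ∑ y ∈ S, f x y + ∑ x ∈ S, ∑ y ∈ Sᶜ, f x y := by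
    rw [← Finset.sum_add_distrib]
    exact Finset.sum_congr rfl fun x _ => (Finset.sum_add_sum_compl S _).symm
  have h2 : ∑ x ∈ S, ∑ y ∈ Sᶜ, f x y = f u w := by
    rw [Finset.sum_eq_single_of_mem u huS, Finset.sum_eq_single_of_mem w (by simpa using hwS)]
    · intro y hy hyw
      by_contra hc
      exact hyw (key u huS y (by simpa using hy) hc).2
    · intro x hx hxu
      refine Finset.sum_eq_zero fun y hy => ?_
      by_contra hc
      exact hxu (key x hx y (by simpa using hy) hc).1
  rw [h0, antisymm_sum_zero S f h, h2, zero_add] at h1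
  exact h1.symm

lemma exists_path_flow {V : Type} [Fintype V] [DecidableEq V] {N : ℕ} (G : SimpleGraph V)
    (c : Fin N → ℤ) {a r : V} (p : G.Walk a r) :
    ∃ f : V → V → Fin N → ℤ, (∀ u w, f u w = - f w u) ∧ (∀ u w, ¬ G.Adj u w → f u w = 0) ∧
      ∀ w, ∑ u, f w u = (if w = a then c else 0) - (if w = r then c else 0) := by
  induction p with
  | nil => exact ⟨fun _ _ => 0, by simp, by simp, by simp⟩
  | @cons a m r hadj p ih =>
    obtain ⟨f, h1, h2, h3⟩ := ih
    refine ⟨fun x y => f x y + ((if x = a ∧ y = m then c else 0) -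
      (if x = m ∧ y = a then c else 0)), ?_, ?_, ?_⟩
    · intro u w
      simp only [h1 u w, and_comm]
      abel
    · intro u w hn
      have e1 : ¬ (u = a ∧ w = m) := by rintro ⟨rfl, rfl⟩; exact hn hadj
      have e2 : ¬ (u = m ∧ w = a) := by rintro ⟨rfl, rfl⟩; exact hn hadj.symm
      simp [h2 u w hn, e1, e2]
    · intro w
      rw [Finset.sum_add_distrib, Finset.sum_sub_distrib, h3]
      simp only [ite_and, Finset.sum_ite_irrel, Finset.sum_ite_eq', Finset.sum_ite_eq,
        Finset.mem_univ, if_true, Finset.sum_const_zero]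
      abel

lemma exists_flow {V : Type} [Fintype V] [DecidableEq V] {N : ℕ} (G : SimpleGraph V)
    (hG : G.Connected) (c : V → Fin N → ℤ) (hc : ∑ v, c v = 0) :
    ∃ f : V → V → Fin N → ℤ, (∀ u w, f u w = - f w u) ∧ (∀ u w, ¬ G.Adj u w → f u w = 0) ∧
      ∀ w, ∑ u, f w u = c w := by
  obtain ⟨r⟩ := hG.nonempty
  choose F h1 h2 h3 using fun a : V => exists_path_flow G (c a) (hG.preconnected a r).some
  refine ⟨fun u w => ∑ a, F a u w, ?_, ?_, ?_⟩
  · intro u w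
    simp only [← Finset.sum_neg_distrib]
    exact Finset.sum_congr rfl fun a _ => h1 a u w
  · intro u w hn
    exact Finset.sum_eq_zero fun a _ => h2 a u w hn
  · intro w
    rw [Finset.sum_comm]
    simp only [h3, Finset.sum_sub_distrib, Finset.sum_ite_eq, Finset.mem_univ, if_true,
      Finset.sum_ite_irrel, hc, Finset.sum_const_zero, ite_self, sub_zero]

/-- On a finite tree with legs, a decoration with prescribed vertex totals exists if and
only if the total balancing condition `∑_l s l = ∑_w b w` holds; moreover such a
decoration is unique when it exists.  (This is the claim that on a genus-zero dual graph
there is at most one — and, when the balancing condition holds, exactly one — choice of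
contact-order decorations `s_{e⃗}` at the nodes satisfying the combinatorial matching
conditions.) -/
theorem tree_decoration_exists_iff_and_unique {V L : Type} [Fintype V] [Fintype L]
    [DecidableEq V] {N : ℕ} (G : SimpleGraph V) (hG : G.IsTree)
    (vmap : L → V) (s : L → Fin N → ℤ) (b : V → Fin N → ℤ) :
    ((∃ t : V → V → Fin N → ℤ, IsTreeDecoration G vmap s b t) ↔
        ∑ l, s l = ∑ w, b w)
    ∧ ∀ t t' : V → V → Fin N → ℤ,
        IsTreeDecoration G vmap s b t → IsTreeDecoration G vmap s b t' → t = t' := by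
  have hfib : ∑ w, ∑ l ∈ Finset.univ.filter (fun l => vmap l = w), s l = ∑ l, s l :=
    Finset.sum_fiberwise _ _ _
  refine ⟨⟨?_, ?_⟩, ?_⟩
  · rintro ⟨t, h1, h2, h3⟩
    rw [← hfib, ← Finset.sum_congr rfl fun w _ => h3 w, Finset.sum_add_distrib,
      antisymm_sum_zero Finset.univ t h1, zero_add]
  · intro h
    obtain ⟨f, h1, h2, h3⟩ := exists_flow G hG.1
      (fun w => b w - ∑ l ∈ Finset.univ.filter (fun l => vmap l = w), s l)
      (by rw [Finset.sum_sub_distrib, hfib, h, sub_self])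
    exact ⟨f, h1, h2, fun w => by rw [h3, sub_add_cancel]⟩
  · rintro t t' ⟨h1, h2, h3⟩ ⟨h1', h2', h3'⟩
    funext u w
    refine sub_eq_zero.1 (flow_zero G hG.2 (fun u w => t u w - t' u w) ?_ ?_ ?_ u w)
    · intro u w
      rw [h1 u w, h1' u w]
      abel
    · intro u w hn
      simp only [h2 u w hn, h2' u w hn, sub_self]
    · intro w
      rw [Finset.sum_sub_distrib, sub_eq_zero]
      exact add_right_cancel ((h3 w).trans (h3' w).symm)
end

section
/- Let Γ be a finite connected multigraph given by darts: a finite type E⃗ with a fixed-point-free involution e ↦ ē, a nonempty finite vertex set V, and a source map v₁ : E⃗ → V with target v₂(e) := v₁(ē), such that any two vertices are joined by a finite path of darts. Let N ∈ ℕ, s : V → ℤ^N, t : E⃗ → ℤ^N with t(ē) = −t(e), and λ : E⃗ → ℚ with λ(e) > 0 and λ(ē) = λ(e), and suppose: (i) for every dart e, s(v₂(e)) − s(v₁(e)) = λ(e)·t(e) in ℚ^N; and (ii) for every vertex v, Σ_{e : v₁(e)=v} t(e) = 0 in ℤ^N. Then s is constant on V and t(e) = 0 for every dart e. (This is the claim,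 proved by a maximum-principle argument, that for a degree-zero stable log map of arbitrary genus only the trivial node decorations satisfy the tropical matching condition and the per-vertex balancing condition.) -/
open scoped BigOperators

/-- Maximum-principle claim for degree-zero stable log maps of arbitrary genus: on a
finite connected multigraph given by darts (a finite type `D` with fixed-point-free
involution `inv` and source map `v₁`, the target of `e` being `v₁ (inv e)`), if
`s : V → ℤ^N`, `t : D → ℤ^N` with `t(ē) = -t(e)`, and positive symmetric edge lengths
`lam : D → ℚ` satisfy the tropical matching condition
`s(v₂ e) - s(v₁ e) = lam e · t e` (in `ℚ^N`) for every dart, together with the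
per-vertex balancing condition `∑_{e : v₁ e = v} t e = 0` in `ℤ^N`, then `s` is
constant and all `t e` vanish. -/
theorem degree_zero_log_trivial_decorations {D V : Type} [Fintype D] [Fintype V]
    [DecidableEq V] [Nonempty V]
    (inv : D → D) (hinv : ∀ e, inv (inv e) = e) (hfp : ∀ e, inv e ≠ e)
    (v₁ : D → V)
    (hconn : ∀ u w : V,
      Relation.ReflTransGen (fun x y => ∃ e, v₁ e = x ∧ v₁ (inv e) = y) u w)
    (N : ℕ) (s : V → Fin N → ℤ) (t : D → Fin N → ℤ) (lam : D → ℚ)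
    (ht : ∀ e, t (inv e) = - t e)
    (hlam_pos : ∀ e, 0 < lam e) (hlam_inv : ∀ e, lam (inv e) = lam e)
    (hmatch : ∀ e i, (s (v₁ (inv e)) i : ℚ) - (s (v₁ e) i : ℚ) = lam e * (t e i : ℚ))
    (hbal : ∀ v, ∑ e ∈ Finset.univ.filter (fun e => v₁ e = v), t e = 0) :
    (∀ u w, s u = s w) ∧ ∀ e, t e = 0 := by
  have key : ∀ i u w, s u i = s w i := by
    intro i
    obtain ⟨m, hm⟩ := Finite.exists_max (fun v => s v i)
    have h : ∀ u, s u i = s m i := by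
      intro u
      induction hconn m u with
      | refl => rfl
      | tail _ hstep ih =>
        obtain ⟨e, he, rfl⟩ := hstep
        have hsum := congrFun (hbal (v₁ e)) i
        rw [Finset.sum_apply, Pi.zero_apply] at hsum
        have hle : ∀ f ∈ Finset.univ.filter (fun f => v₁ f = v₁ e), t f i ≤ 0 := by
          intro f hf
          have hf' : v₁ f = v₁ e := (Finset.mem_filter.mp hf).2
          have h1 := hmatch f i
          have h2 : (s (v₁ (inv f)) i : ℚ) ≤ s (v₁ f) i := by
            rw [hf', he, ih]
            exact_mod_cast hm _
          by_contra hpos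
          have h3 : (0 : ℚ) < t f i := by exact_mod_cast not_le.mp hpos
          have h4 := mul_pos (hlam_pos f) h3
          linarith
        have hz := (Finset.sum_eq_zero_iff_of_nonpos hle).mp hsum e (by simp)
        have h1 := hmatch e i
        rw [hz, Int.cast_zero, mul_zero, sub_eq_zero] at h1
        rw [← ih, ← he]
        exact_mod_cast h1
    intro u w
    rw [h u, h w]
  refine ⟨fun u w => funext fun i => key i u w, fun e => funext fun i => ?_⟩
  have h1 := hmatch e i
  rw [key i (v₁ (inv e)) (v₁ e), sub_self] at h1
  have h2 := (mul_eq_zero.mp h1.symm).resolve_left (hlam_pos e).ne'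
  exact_mod_cast h2
end
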